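/- Let G be a finite simple graph with at least two vertices whose line graph L(G) has at least two edges. For every tree embedding (T,b) of G there exists a branch decomposition of L(G) whose width is at most the edge congestion ec(T,b). In particular, branchwidth(L(G)) ≤ ec(G). -/

import Mathlib

/-!
Every edge of `L(G)` joins two edges of `G` with a common vertex; choosing one such vertex gives its
*anchor* in `V(G)`. Starting from a tree embedding `(T, b)` of `G`, replace each leaf `b v` by a
rooted binary tree whose leaves are the edges of `L(G)` anchored at `v`, then delete empty branches
and suppress vertices of degree two. This is a branch decomposition of `L(G)` of width at most
`ec(T, b)`, for two reasons.

* Across an edge `f` inherited from `T`, a vertex `e = uv` of `L(G)` is counted only if it is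
  incident with edges of `L(G)` anchored on both sides of `f`. These anchors lie in `{u, v}`, so
  `u` and `v` lie on different sides and the routing of `e` passes through `f`
  (`boundary_sideLabels_le`).
* Across an edge inside the binary tree put in place of `b v`, only edges of `G` incident with `v`
  are counted, and the routings of all of these use the pendant edge at `b v` (`boundary_leaf_le`).

To avoid explicit tree surgery, rooted binary trees with prescribed properties of the leaf sets of
their subtrees are encoded by the inductive predicate `Build`: here the property is that the
`boundary` of a leaf set has at most `ec(T, b)` elements. Trees are built on the sides of `T` by
induction on the size of the side (`build_sideLabels`); an empty branch contributes nothing, so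
no vertex of degree two ever appears. `Build.exists_cubic_tree` turns the result into a cubic
tree in which every edge is the unique edge crossing some two-colouring of the vertices. The
colourings show both that the graph is acyclic and which leaves an edge separates, hence its width
(`crossing_of_mem_edges`).

The inequality between the two minima also needs `G` to have some tree embedding
(`exists_treeEmbedding`), since the infimum of the empty set in `ℕ` is the junk value `0`.
-/

open SimpleGraph Finset
open scoped Classical

noncomputable section

/-- A tree embedding of a simple graph `G` into a cubic tree on vertex type `W`:
a finite tree `T` all of whose vertices have degree 1 or 3, together with a bijection
`b` from the vertices of `G` to the leaves of `T`. -/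
structure TreeEmbedding {V : Type} (G : SimpleGraph V) (W : Type) [Fintype W] where
  T : SimpleGraph W
  b : V → W
  isTree : T.IsTree
  cubic : ∀ t : W, (T.neighborSet t).ncard = 1 ∨ (T.neighborSet t).ncard = 3
  leaf_b : ∀ v : V, (T.neighborSet (b v)).ncard = 1
  inj : Function.Injective b
  surj_leaf : ∀ t : W, (T.neighborSet t).ncard = 1 → ∃ v : V, b v = t

variable {V W : Type} [Fintype V] [Fintype W]

/-- The routing of the edge `e` of `G` passes through the vertex `t` of the tree. -/
def RoutesThruV {G : SimpleGraph V} (E : TreeEmbedding G W) (e : Sym2 V) (t : W) : Prop :=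
  ∃ u v : V, e = s(u, v) ∧ ∃ p : E.T.Walk (E.b u) (E.b v), p.IsPath ∧ t ∈ p.support

/-- The routing of the edge `e` of `G` passes through the edge `f` of the tree. -/
def RoutesThruE {G : SimpleGraph V} (E : TreeEmbedding G W) (e : Sym2 V) (f : Sym2 W) : Prop :=
  ∃ u v : V, e = s(u, v) ∧ ∃ p : E.T.Walk (E.b u) (E.b v), p.IsPath ∧ f ∈ p.edges

/-- The (weighted) congestion of a vertex `t` of the tree. -/
def conV {G : SimpleGraph V} (E : TreeEmbedding G W) (w : Sym2 V → ℕ) (t : W) : ℕ :=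
  ∑ e ∈ G.edgeFinset.filter (fun e => RoutesThruV E e t), w e

/-- The (weighted) congestion of an edge `f` of the tree. -/
def conE {G : SimpleGraph V} (E : TreeEmbedding G W) (w : Sym2 V → ℕ) (f : Sym2 W) : ℕ :=
  ∑ e ∈ G.edgeFinset.filter (fun e => RoutesThruE E e f), w e

/-- The vertex congestion of a tree embedding. -/
def vcOf {G : SimpleGraph V} (E : TreeEmbedding G W) (w : Sym2 V → ℕ) : ℕ :=
  Finset.univ.sup (conV E w)

/-- The edge congestion of a tree embedding. -/
def ecOf {G : SimpleGraph V} (E : TreeEmbedding G W) (w : Sym2 V → ℕ) : ℕ :=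
  E.T.edgeFinset.sup (conE E w)

/-- The vertex congestion of a graph: minimum over tree embeddings. -/
def vcG (G : SimpleGraph V) (w : Sym2 V → ℕ) : ℕ :=
  sInf {k | ∃ (n : ℕ) (E : TreeEmbedding G (Fin n)), vcOf E w = k}

/-- The edge congestion of a graph: minimum over tree embeddings. -/
def ecG (G : SimpleGraph V) (w : Sym2 V → ℕ) : ℕ :=
  sInf {k | ∃ (n : ℕ) (E : TreeEmbedding G (Fin n)), ecOf E w = k}

/-- A branch decomposition of a simple graph `H`: a cubic tree together with a bijection
from the edges of `H` to the leaves of the tree. -/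
structure BranchDecomp {U : Type} (H : SimpleGraph U) (W : Type) [Fintype W] where
  T : SimpleGraph W
  b : H.edgeSet → W
  isTree : T.IsTree
  cubic : ∀ t : W, (T.neighborSet t).ncard = 1 ∨ (T.neighborSet t).ncard = 3
  leaf_b : ∀ e : H.edgeSet, (T.neighborSet (b e)).ncard = 1
  inj : Function.Injective b
  surj_leaf : ∀ t : W, (T.neighborSet t).ncard = 1 → ∃ e : H.edgeSet, b e = t

variable {U : Type} [Fintype U]

/-- The vertex `t` of the tree lies on the subtree `S_v` (the minimal subtree of `T`
containing all leaves `b e` with `e` incident to `v`). -/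
def InSubtreeV {H : SimpleGraph U} {W : Type} [Fintype W] (D : BranchDecomp H W) (v : U)
    (t : W) : Prop :=
  ∃ e₁ e₂ : H.edgeSet, v ∈ (e₁ : Sym2 U) ∧ v ∈ (e₂ : Sym2 U) ∧
    ∃ p : D.T.Walk (D.b e₁) (D.b e₂), p.IsPath ∧ t ∈ p.support

/-- The edge `f` of the tree lies on the subtree `S_v`. -/
def InSubtreeE {H : SimpleGraph U} {W : Type} [Fintype W] (D : BranchDecomp H W) (v : U)
    (f : Sym2 W) : Prop :=
  ∃ e₁ e₂ : H.edgeSet, v ∈ (e₁ : Sym2 U) ∧ v ∈ (e₂ : Sym2 U) ∧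
    ∃ p : D.T.Walk (D.b e₁) (D.b e₂), p.IsPath ∧ f ∈ p.edges

/-- The width of an edge `f` of the tree of a branch decomposition. -/
def widthE {H : SimpleGraph U} {W : Type} [Fintype W] (D : BranchDecomp H W) (f : Sym2 W) : ℕ :=
  (Finset.univ.filter (fun v : U => InSubtreeE D v f)).card

/-- The width of a branch decomposition. -/
def widthOf {H : SimpleGraph U} {W : Type} [Fintype W] (D : BranchDecomp H W) : ℕ :=
  D.T.edgeFinset.sup (widthE D)

/-- The branchwidth of a simple graph (0 if it admits no branch decomposition). -/
def branchwidth (H : SimpleGraph U) : ℕ :=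
  sInf {k | ∃ (n : ℕ) (D : BranchDecomp H (Fin n)), widthOf D = k}

/-- The maximum degree of a finite simple graph. -/
def maxDeg (G : SimpleGraph V) : ℕ :=
  Finset.univ.sup (fun v => (G.neighborSet v).ncard)

/-- The weighted degree of a vertex. -/
def degw (G : SimpleGraph V) (w : Sym2 V → ℕ) (v : V) : ℕ :=
  ∑ e ∈ G.edgeFinset.filter (fun e => v ∈ e), w e

end

/-! ### Crossing edges of a two-colouring -/

section Crossing

variable {W : Type} {T : SimpleGraph W} {c : W → Prop} {x y : W}

/-- If `s(x, y)` is the only edge whose ends get different colours, then every walk between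
differently coloured vertices uses it. -/
lemma crossing_mem_edges
    (hc : ∀ u v, T.Adj u v → ¬(c u ↔ c v) → s(u, v) = s(x, y)) :
    ∀ {u v : W} (p : T.Walk u v), ¬(c u ↔ c v) → s(x, y) ∈ p.edges := by
  intro u v p
  induction p with
  | nil => simp
  | @cons u w v h p ih =>
    intro huv
    rw [Walk.edges_cons, List.mem_cons]
    by_cases huw : c u ↔ c w
    · exact Or.inr (ih (by rwa [← huw]))
    · exact Or.inl (hc _ _ h huw).symm

/-- If `s(x, y)` is the only edge whose ends get different colours, then a path through it
changes colour exactly once, so its ends have different colours. -/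
lemma crossing_of_mem_edges (hxy : ¬(c x ↔ c y))
    (hc : ∀ u v, T.Adj u v → ¬(c u ↔ c v) → s(u, v) = s(x, y)) :
    ∀ {u v : W} (p : T.Walk u v), p.edges.Nodup → s(x, y) ∈ p.edges → ¬(c u ↔ c v) := by
  intro u v p
  induction p with
  | nil => simp
  | @cons u w v h p ih =>
    intro hnd hmem
    rw [Walk.edges_cons, List.nodup_cons] at hnd
    rw [Walk.edges_cons, List.mem_cons] at hmem
    by_cases he : s(x, y) = s(u, w)
    · have h1 : c w ↔ c v := by
        by_contra hcon
        exact hnd.1 (he ▸ crossing_mem_edges hc p hcon)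
      have h2 : ¬(c u ↔ c w) := by
        rcases Sym2.eq_iff.1 he with ⟨rfl, rfl⟩ | ⟨rfl, rfl⟩
        · exact hxy
        · exact fun h => hxy h.symm
      rwa [← h1]
    · have h1 : c u ↔ c w := by
        by_contra hcon
        exact he (hc _ _ h hcon).symm
      rw [h1]
      exact ih hnd.2 (hmem.resolve_left he)

end Crossing

/-! ### Building cubic trees from nested families of cuts -/

section Build

variable {X : Type}

/-- `Build good S`: the label set `S` is the set of leaves of a rooted binary tree in which the
leaf set below every node satisfies `good`. -/
inductive Build (good : Set X → Prop) : Set X → Prop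
  | single (a : X) : good {a} → Build good {a}
  | union (S R : Set X) : Disjoint S R → Build good S → Build good R → good (S ∪ R) →
      Build good (S ∪ R)

lemma Build.good {good : Set X → Prop} {S : Set X} (h : Build good S) : good S := by
  cases h <;> assumption

/-- A connected graph `T` with root `r`, labelled by `b` on `S`, in which every edge is the unique
crossing edge of some cut, such that the labels on the side of the cut avoiding the root form
a `good` set. (The cuts make every edge a bridge, so `T` is a tree.) -/
def CutTree {W : Type} (good : Set X → Prop) (T : SimpleGraph W) (r : W) (b : X → W)
    (S : Set X) : Prop :=
  T.Connected ∧ ∀ x y, T.Adj x y → ∃ c : W → Prop, ¬ c r ∧ ¬(c x ↔ c y) ∧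
    (∀ u v, T.Adj u v → ¬(c u ↔ c v) → s(u, v) = s(x, y)) ∧ good {a | a ∈ S ∧ c (b a)}

/-- The disjoint union of `T₁` and `T₂` together with an edge joining `r₁` to `r₂`. -/
def joinGraph {W₁ W₂ : Type} (T₁ : SimpleGraph W₁) (r₁ : W₁) (T₂ : SimpleGraph W₂) (r₂ : W₂) :
    SimpleGraph (W₁ ⊕ W₂) :=
  (T₁ ⊕g T₂) ⊔ SimpleGraph.edge (Sum.inl r₁) (Sum.inr r₂)

section Join

variable {W₁ W₂ : Type} {T₁ : SimpleGraph W₁} {r₁ : W₁} {T₂ : SimpleGraph W₂} {r₂ : W₂}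

@[simp] lemma joinGraph_ll {u v : W₁} :
    (joinGraph T₁ r₁ T₂ r₂).Adj (Sum.inl u) (Sum.inl v) ↔ T₁.Adj u v := by
  simp [joinGraph, SimpleGraph.edge_adj]

@[simp] lemma joinGraph_rr {u v : W₂} :
    (joinGraph T₁ r₁ T₂ r₂).Adj (Sum.inr u) (Sum.inr v) ↔ T₂.Adj u v := by
  simp [joinGraph, SimpleGraph.edge_adj]

@[simp] lemma joinGraph_lr {u : W₁} {v : W₂} :
    (joinGraph T₁ r₁ T₂ r₂).Adj (Sum.inl u) (Sum.inr v) ↔ u = r₁ ∧ v = r₂ := by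
  simp [joinGraph, SimpleGraph.edge_adj, eq_comm]

@[simp] lemma joinGraph_rl {u : W₁} {v : W₂} :
    (joinGraph T₁ r₁ T₂ r₂).Adj (Sum.inr v) (Sum.inl u) ↔ u = r₁ ∧ v = r₂ := by
  rw [SimpleGraph.adj_comm, joinGraph_lr]

lemma ncard_joinGraph_inl [Fintype W₁] (t : W₁) :
    ((joinGraph T₁ r₁ T₂ r₂).neighborSet (Sum.inl t)).ncard =
      (T₁.neighborSet t).ncard + if t = r₁ then 1 else 0 := by
  by_cases h : t = r₁
  · have : (joinGraph T₁ r₁ T₂ r₂).neighborSet (Sum.inl t) =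
        insert (Sum.inr r₂) (Sum.inl '' T₁.neighborSet t) := by
      ext (z | z) <;> simp [h]
    rw [this, Set.ncard_insert_of_notMem (by simp) (Set.toFinite _),
      Set.ncard_image_of_injective _ Sum.inl_injective, if_pos h]
  · have : (joinGraph T₁ r₁ T₂ r₂).neighborSet (Sum.inl t) = Sum.inl '' T₁.neighborSet t := by
      ext (z | z) <;> simp [h]
    rw [this, Set.ncard_image_of_injective _ Sum.inl_injective, if_neg h, add_zero]

lemma ncard_joinGraph_inr [Fintype W₂] (t : W₂) :
    ((joinGraph T₁ r₁ T₂ r₂).neighborSet (Sum.inr t)).ncard =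
      (T₂.neighborSet t).ncard + if t = r₂ then 1 else 0 := by
  by_cases h : t = r₂
  · have : (joinGraph T₁ r₁ T₂ r₂).neighborSet (Sum.inr t) =
        insert (Sum.inl r₁) (Sum.inr '' T₂.neighborSet t) := by
      ext (z | z) <;> simp [h]
    rw [this, Set.ncard_insert_of_notMem (by simp) (Set.toFinite _),
      Set.ncard_image_of_injective _ Sum.inr_injective, if_pos h]
  · have : (joinGraph T₁ r₁ T₂ r₂).neighborSet (Sum.inr t) = Sum.inr '' T₂.neighborSet t := by
      ext (z | z) <;> simp [h]
    rw [this, Set.ncard_image_of_injective _ Sum.inr_injective, if_neg h, add_zero]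

/-- The labelling of `W₁ ⊕ W₂` that uses `b₁` on `S₁` and `b₂` elsewhere. -/
noncomputable def joinLabel (S₁ : Set X) (b₁ : X → W₁) (b₂ : X → W₂) (a : X) : W₁ ⊕ W₂ :=
  if a ∈ S₁ then Sum.inl (b₁ a) else Sum.inr (b₂ a)

lemma CutTree.join {good : Set X → Prop} {b₁ : X → W₁} {b₂ : X → W₂} {S₁ S₂ : Set X}
    (hd : Disjoint S₁ S₂) (hS₁ : good S₁) (h₁ : CutTree good T₁ r₁ b₁ S₁)
    (h₂ : CutTree good T₂ r₂ b₂ S₂) :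
    CutTree good (joinGraph T₁ r₁ T₂ r₂) (Sum.inr r₂) (joinLabel S₁ b₁ b₂) (S₁ ∪ S₂) := by
  have hd' : ∀ a ∈ S₂, a ∉ S₁ := fun a ha ha' => Set.disjoint_left.1 hd ha' ha
  refine ⟨h₁.1.sum_sup_edge h₂.1, ?_⟩
  have hmid : ∃ c : W₁ ⊕ W₂ → Prop, ¬ c (Sum.inr r₂) ∧ ¬(c (Sum.inl r₁) ↔ c (Sum.inr r₂)) ∧
      (∀ u v, (joinGraph T₁ r₁ T₂ r₂).Adj u v → ¬(c u ↔ c v) →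
        s(u, v) = s(Sum.inl r₁, Sum.inr r₂)) ∧
      good {a | a ∈ S₁ ∪ S₂ ∧ c (joinLabel S₁ b₁ b₂ a)} := by
    refine ⟨Sum.elim (fun _ => True) (fun _ => False), by simp, by simp, ?_, ?_⟩
    · rintro (u | u) (v | v) <;> simp +contextual
    · convert hS₁ using 1
      ext a
      by_cases ha : a ∈ S₁ <;> simp [joinLabel, ha]
  rintro (x | x) (y | y) hxy
  · obtain ⟨c, hr, hc, hu, hg⟩ := h₁.2 x y (by simpa using hxy)
    refine ⟨Sum.elim c (fun _ => False), by simp, by simpa using hc, ?_, ?_⟩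
    · rintro (u | u) (v | v) h h'
      · have := hu u v (by simpa using h) (by simpa using h')
        simpa using this
      · simp only [joinGraph_lr] at h
        simp [h.1, hr] at h'
      · simp only [joinGraph_rl] at h
        simp [h.1, hr] at h'
      · simp at h'
    · convert hg using 1
      ext a
      by_cases ha : a ∈ S₁ <;> simp [joinLabel, ha]
  · obtain ⟨rfl, rfl⟩ := joinGraph_lr.1 hxy
    exact hmid
  · obtain ⟨rfl, rfl⟩ := joinGraph_rl.1 hxy
    obtain ⟨c, hr, hc, hu, hg⟩ := hmid
    exact ⟨c, hr, fun h => hc h.symm, fun u v h h' => (hu u v h h').trans Sym2.eq_swap, hg⟩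
  · obtain ⟨c, hr, hc, hu, hg⟩ := h₂.2 x y (by simpa using hxy)
    refine ⟨Sum.elim (fun _ => False) c, by simpa using hr, by simpa using hc, ?_, ?_⟩
    · rintro (u | u) (v | v) h h'
      · simp at h'
      · simp only [joinGraph_lr] at h
        simp [h.2, hr] at h'
      · simp only [joinGraph_rl] at h
        simp [h.2, hr] at h'
      · have := hu u v (by simpa using h) (by simpa using h')
        simpa using this
    · convert hg using 1
      ext a
      by_cases ha : a ∈ S₁
      · have : a ∉ S₂ := fun h => hd' a h ha
        simp [joinLabel, ha, this]
      · simp [joinLabel, ha]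

lemma CutTree.subsingleton {W : Type} [Nonempty W] [Subsingleton W] {good : Set X → Prop}
    {T : SimpleGraph W} {r : W} {b : X → W} {S : Set X} : CutTree good T r b S := by
  refine ⟨⟨fun u v => ?_⟩, fun x y h => absurd (Subsingleton.elim x y) h.ne⟩
  rw [Subsingleton.elim u v]

end Join

/-- The degree of `t` in `T`, where the root `r` counts one extra half-edge. -/
noncomputable def plantedDeg {W : Type} (T : SimpleGraph W) (r t : W) : ℕ :=
  (T.neighborSet t).ncard + if t = r then 1 else 0

/-- A planted cubic tree with leaf set `S`: the root's extra half-edge is counted in its degree,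
so that two such trees may be joined by an edge between their roots. -/
def Planted (good : Set X → Prop) (S : Set X) : Prop :=
  ∃ (W : Type) (_ : Fintype W) (T : SimpleGraph W) (r : W) (b : X → W),
    CutTree good T r b S ∧ (∀ t, plantedDeg T r t = 1 ∨ plantedDeg T r t = 3) ∧
    (∀ t, plantedDeg T r t = 1 ↔ ∃ a ∈ S, b a = t) ∧ Set.InjOn b S

lemma Build.planted {good : Set X → Prop} {S : Set X} (h : Build good S) : Planted good S := by
  induction h with
  | single a ha =>
    refine ⟨Unit, inferInstance, ⊥, (), fun _ => (), CutTree.subsingleton, ?_, ?_, ?_⟩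
    · simp [plantedDeg]
    · simp [plantedDeg]
    · simp
  | union S R hd hS hR hSR ihS ihR =>
    obtain ⟨W₁, _, T₁, r₁, b₁, hc₁, hd₁, hl₁, hi₁⟩ := ihS
    obtain ⟨W₂, _, T₂, r₂, b₂, hc₂, hd₂, hl₂, hi₂⟩ := ihR
    -- The new root is a single vertex joined to both old roots.
    have hJ₁ : CutTree good (joinGraph T₂ r₂ (⊥ : SimpleGraph Unit) ()) (Sum.inr ())
        (joinLabel R b₂ (fun _ => ())) (R ∪ ∅) :=
      CutTree.join (Set.disjoint_empty R) hR.good hc₂ CutTree.subsingleton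
    have hJ₂ := CutTree.join (by simpa using hd) hS.good hc₁ hJ₁
    rw [Set.union_empty] at hJ₂
    have hd' : ∀ a ∈ R, a ∉ S := fun a ha ha' => Set.disjoint_left.1 hd ha' ha
    have e₁ : ∀ t, plantedDeg (joinGraph T₁ r₁ (joinGraph T₂ r₂ (⊥ : SimpleGraph Unit) ())
        (Sum.inr ())) (Sum.inr (Sum.inr ())) (Sum.inl t) = plantedDeg T₁ r₁ t := by
      intro t
      simp [plantedDeg, ncard_joinGraph_inl]
    have e₂ : ∀ t, plantedDeg (joinGraph T₁ r₁ (joinGraph T₂ r₂ (⊥ : SimpleGraph Unit) ())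
        (Sum.inr ())) (Sum.inr (Sum.inr ())) (Sum.inr (Sum.inl t)) = plantedDeg T₂ r₂ t := by
      intro t
      simp [plantedDeg, ncard_joinGraph_inl, ncard_joinGraph_inr]
    have e₃ : ∀ t, plantedDeg (joinGraph T₁ r₁ (joinGraph T₂ r₂ (⊥ : SimpleGraph Unit) ())
        (Sum.inr ())) (Sum.inr (Sum.inr ())) (Sum.inr (Sum.inr t)) = 3 := by
      intro t
      simp [plantedDeg, ncard_joinGraph_inr]
    refine ⟨_, inferInstance, _, _, _, hJ₂, ?_, ?_, ?_⟩
    · rintro (t | t | t)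
      · rw [e₁]; exact hd₁ t
      · rw [e₂]; exact hd₂ t
      · rw [e₃]; exact Or.inr rfl
    · rintro (t | t | t)
      · rw [e₁, hl₁]
        constructor
        · rintro ⟨a, ha, rfl⟩
          exact ⟨a, Or.inl ha, by simp [joinLabel, ha]⟩
        · rintro ⟨a, ha, h⟩
          by_cases haS : a ∈ S
          · exact ⟨a, haS, by simpa [joinLabel, haS] using h⟩
          · simp [joinLabel, haS] at h
      · rw [e₂, hl₂]
        constructor
        · rintro ⟨a, ha, rfl⟩
          exact ⟨a, Or.inr ha, by simp [joinLabel, ha, hd' a ha]⟩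
        · rintro ⟨a, ha, h⟩
          by_cases haS : a ∈ S
          · simp [joinLabel, haS] at h
          · have haR := ha.resolve_left haS
            exact ⟨a, haR, by simpa [joinLabel, haS, haR] using h⟩
      · rw [e₃]
        refine iff_of_false (by norm_num) ?_
        rintro ⟨a, ha, h⟩
        by_cases haS : a ∈ S
        · simp [joinLabel, haS] at h
        · simp [joinLabel, haS, ha.resolve_left haS] at h
    · intro a ha a' ha' h
      by_cases haS : a ∈ S <;> by_cases haS' : a' ∈ S
      · exact hi₁ haS haS' (by simpa [joinLabel, haS, haS'] using h)
      · simp [joinLabel, haS, haS'] at h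
      · simp [joinLabel, haS, haS'] at h
      · have haR := ha.resolve_left haS
        have haR' := ha'.resolve_left haS'
        exact hi₂ haR haR' (by simpa [joinLabel, haS, haS', haR, haR'] using h)

lemma CutTree.isTree {W : Type} {good : Set X → Prop} {T : SimpleGraph W} {r : W} {b : X → W}
    {S : Set X} (h : CutTree good T r b S) : T.IsTree := by
  refine ⟨h.1, isAcyclic_iff_forall_adj_isBridge.2 fun x y hxy => ?_⟩
  obtain ⟨c, -, hc, hu, -⟩ := h.2 x y hxy
  exact isBridge_iff_forall_walk_mem_edges.2 fun p => crossing_mem_edges hu p hc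

/-- A family of at least two labels that can be built by `good` sets is realised by a cubic tree
whose leaves are the labels and whose edges all induce `good` cuts. -/
lemma Build.exists_cubic_tree [Nontrivial X] {good : Set X → Prop} (h : Build good Set.univ) :
    ∃ (n : ℕ) (T : SimpleGraph (Fin n)) (b : X → Fin n), T.IsTree ∧
      (∀ t, (T.neighborSet t).ncard = 1 ∨ (T.neighborSet t).ncard = 3) ∧
      (∀ t, (T.neighborSet t).ncard = 1 ↔ ∃ a, b a = t) ∧ Function.Injective b ∧
      ∀ x y, T.Adj x y → ∃ c : Fin n → Prop, ¬(c x ↔ c y) ∧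
        (∀ u v, T.Adj u v → ¬(c u ↔ c v) → s(u, v) = s(x, y)) ∧ good {a | c (b a)} := by
  generalize hU : (Set.univ : Set X) = U at h
  cases h with
  | single a ha =>
    obtain ⟨a', ha'⟩ := exists_ne a
    have : a' ∈ ({a} : Set X) := hU ▸ Set.mem_univ a'
    exact absurd this ha'
  | union S R hd hS hR hSR =>
    obtain ⟨W₁, _, T₁, r₁, b₁, hc₁, hd₁, hl₁, hi₁⟩ := hS.planted
    obtain ⟨W₂, _, T₂, r₂, b₂, hc₂, hd₂, hl₂, hi₂⟩ := hR.planted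
    have hJ := CutTree.join hd hS.good hc₁ hc₂
    have hd' : ∀ a ∈ R, a ∉ S := fun a ha ha' => Set.disjoint_left.1 hd ha' ha
    have hmem : ∀ a, a ∉ S → a ∈ R := fun a ha =>
      ((hU ▸ Set.mem_univ a : a ∈ S ∪ R)).resolve_left ha
    rw [← hU] at hJ
    let e := Fintype.equivFin (W₁ ⊕ W₂)
    let J := joinGraph T₁ r₁ T₂ r₂
    let φ : J.comap e.symm ≃g J := SimpleGraph.Iso.comap e.symm J
    have hn : ∀ t, ((J.comap e.symm).neighborSet t).ncard = (J.neighborSet (e.symm t)).ncard := by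
      intro t
      have : (J.comap e.symm).neighborSet t = e.symm ⁻¹' (J.neighborSet (e.symm t)) := rfl
      rw [this, Set.ncard_preimage_of_injective_subset_range e.symm.injective (by simp)]
    have e₁ : ∀ t, (J.neighborSet (Sum.inl t)).ncard = plantedDeg T₁ r₁ t :=
      fun t => ncard_joinGraph_inl t
    have e₂ : ∀ t, (J.neighborSet (Sum.inr t)).ncard = plantedDeg T₂ r₂ t :=
      fun t => ncard_joinGraph_inr t
    have hleaf : ∀ t, (J.neighborSet t).ncard = 1 ↔ ∃ a, joinLabel S b₁ b₂ a = t := by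
      rintro (t | t)
      · rw [e₁, hl₁]
        constructor
        · rintro ⟨a, ha, rfl⟩
          exact ⟨a, by simp [joinLabel, ha]⟩
        · rintro ⟨a, h⟩
          by_cases haS : a ∈ S
          · exact ⟨a, haS, by simpa [joinLabel, haS] using h⟩
          · simp [joinLabel, haS] at h
      · rw [e₂, hl₂]
        constructor
        · rintro ⟨a, ha, rfl⟩
          exact ⟨a, by simp [joinLabel, hd' a ha]⟩
        · rintro ⟨a, h⟩
          by_cases haS : a ∈ S
          · simp [joinLabel, haS] at h
          · exact ⟨a, hmem a haS, by simpa [joinLabel, haS] using h⟩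
    refine ⟨_, J.comap e.symm, fun a => e (joinLabel S b₁ b₂ a), φ.isTree_iff.2 hJ.isTree,
      ?_, ?_, ?_, ?_⟩
    · intro t
      rw [hn]
      rcases e.symm t with t | t
      · rw [e₁]; exact hd₁ t
      · rw [e₂]; exact hd₂ t
    · intro t
      rw [hn, hleaf]
      simp only [Equiv.eq_symm_apply]
    · intro a a' h
      replace h := e.injective h
      by_cases haS : a ∈ S <;> by_cases haS' : a' ∈ S
      · exact hi₁ haS haS' (by simpa [joinLabel, haS, haS'] using h)
      · simp [joinLabel, haS, haS'] at h
      · simp [joinLabel, haS, haS'] at h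
      · exact hi₂ (hmem a haS) (hmem a' haS') (by simpa [joinLabel, haS, haS'] using h)
    · intro x y hxy
      obtain ⟨c, -, hc, hu, hg⟩ := hJ.2 (e.symm x) (e.symm y) hxy
      refine ⟨fun t => c (e.symm t), hc, fun u v huv h => ?_, ?_⟩
      · have := hu _ _ huv h
        simpa using this
      · simpa using hg

/-- If every subset of a finite nonempty set is `good`, the set can be built. -/
lemma Build.of_forall_subset {good : Set X → Prop} {S : Set X} (hfin : S.Finite)
    (hne : S.Nonempty) (h : ∀ R ⊆ S, good R) : Build good S := by
  induction S, hfin using Set.Finite.induction_on with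
  | empty => exact absurd hne Set.not_nonempty_empty
  | @insert a S ha hS ih =>
    rcases S.eq_empty_or_nonempty with rfl | hne'
    · simpa using Build.single a (h _ (by simp))
    · rw [← Set.singleton_union]
      exact Build.union _ _ (by simpa using ha) (Build.single a (h _ (by simp)))
        (ih hne' fun R hR => h R (hR.trans (Set.subset_insert _ _))) (h _ (by simp))

end Build

/-! ### Sides of an edge in a tree -/

section Sides

variable {W : Type} {T : SimpleGraph W}

lemma exists_adj_closer (hT : T.IsTree) {w t : W} (h : w ≠ t) :
    ∃ p, T.Adj t p ∧ T.dist w p < T.dist w t := by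
  obtain ⟨P, hP⟩ := hT.connected.exists_walk_length_eq_dist t w
  cases P with
  | nil => exact absurd rfl h
  | @cons _ p _ hadj Q =>
    refine ⟨p, hadj, ?_⟩
    have := T.dist_le Q
    rw [Walk.length_cons] at hP
    rw [T.dist_comm (u := w), T.dist_comm (u := w)]
    omega

lemma adj_closer_unique (hT : T.IsTree) {w t p q : W} (hp : T.Adj t p) (hq : T.Adj t q)
    (hp' : T.dist w p < T.dist w t) (hq' : T.dist w q < T.dist w t) : p = q := by
  have key : ∀ r, T.Adj t r → T.dist w r < T.dist w t →
      ∃ P : T.Walk w t, P.IsPath ∧ P.penultimate = r := by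
    intro r hr hr'
    obtain ⟨P, hP⟩ := hT.connected.exists_walk_length_eq_dist w r
    refine ⟨P.concat hr.symm, Walk.isPath_of_length_eq_dist _ ?_, by simp⟩
    have := hT.dist_eq_dist_add_one_of_adj w hr
    rw [Walk.length_concat]
    omega
  obtain ⟨P, hP, rfl⟩ := key p hp hp'
  obtain ⟨Q, hQ, rfl⟩ := key q hq hq'
  rw [(hT.existsUnique_path w t).unique hP hQ]

/-- The vertices closer to `t` than to `s`; for an edge `s(s, t)` of a tree, this is the component
of `t` after deleting that edge. -/
def side (T : SimpleGraph W) (s t : W) : Set W := {w | T.dist w t < T.dist w s}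

lemma mem_side_self (hT : T.IsTree) {s t : W} (h : T.Adj s t) : t ∈ side T s t := by
  have := hT.dist_ne_of_adj t h
  simp only [side, Set.mem_ofPred_eq, dist_self] at *
  omega

lemma mem_side_swap (hT : T.IsTree) {s t w : W} (h : T.Adj s t) :
    w ∈ side T t s ↔ w ∉ side T s t := by
  have := hT.dist_ne_of_adj w h
  simp only [side, Set.mem_ofPred_eq]
  omega

lemma mem_side_iff (hT : T.IsTree) {s t w : W} (h : T.Adj s t) :
    w ∈ side T s t ↔ w = t ∨ ∃ p, T.Adj t p ∧ p ≠ s ∧ w ∈ side T t p := by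
  constructor
  · intro hw
    by_cases hwt : w = t
    · exact Or.inl hwt
    · obtain ⟨p, hp, hp'⟩ := exists_adj_closer hT hwt
      refine Or.inr ⟨p, hp, ?_, hp'⟩
      rintro rfl
      exact absurd hw (not_lt.2 hp'.le)
  · rintro (rfl | ⟨p, hp, hps, hw⟩)
    · exact mem_side_self hT h
    · by_contra hcon
      exact hps (adj_closer_unique hT hp h.symm hw ((mem_side_swap hT h).2 hcon))

lemma side_disjoint (hT : T.IsTree) {t p q : W} (hp : T.Adj t p) (hq : T.Adj t q) (hpq : p ≠ q) :
    Disjoint (side T t p) (side T t q) :=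
  Set.disjoint_left.2 fun _ h h' => hpq (adj_closer_unique hT hp hq h h')

lemma side_crossing (hT : T.IsTree) {s t u v : W} (hst : T.Adj s t) (huv : T.Adj u v)
    (hu : u ∈ side T s t) (hv : v ∉ side T s t) : u = t ∧ v = s := by
  have hv' : T.dist v s < T.dist v t := (mem_side_swap hT hst).2 hv
  have hu' : T.dist u t < T.dist u s := hu
  have h1 := hT.dist_eq_dist_add_one_of_adj u hst
  have h2 := hT.dist_eq_dist_add_one_of_adj v hst
  have h3 := hT.dist_eq_dist_add_one_of_adj s huv
  have h4 := hT.dist_eq_dist_add_one_of_adj t huv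
  simp only [T.dist_comm (u := s), T.dist_comm (u := t)] at h3 h4
  have hvs : v = s := by
    by_contra hne
    obtain ⟨p, hp, hps⟩ := exists_adj_closer hT (Ne.symm hne)
    -- The next vertex on the way from `v` to `s` is also closer to `t`, so it must be `u`,
    -- which is farther from `s` than `v` is.
    have h5 := hT.dist_eq_dist_add_one_of_adj p hst
    have hpu : p = u := by
      refine adj_closer_unique (w := t) hT hp huv.symm ?_ ?_ <;>
      · simp only [T.dist_comm (u := s), T.dist_comm (u := t)] at hps ⊢
        omega
    subst hpu
    simp only [T.dist_comm (u := s)] at hps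
    omega
  subst hvs
  refine ⟨?_, rfl⟩
  rw [← hT.connected.dist_eq_zero_iff]
  simp only [dist_self] at *
  omega

lemma side_crossing_edge (hT : T.IsTree) {s t : W} (hst : T.Adj s t) (u v : W) (huv : T.Adj u v)
    (h : ¬(u ∈ side T s t ↔ v ∈ side T s t)) : s(u, v) = s(s, t) := by
  by_cases hu : u ∈ side T s t
  · obtain ⟨rfl, rfl⟩ := side_crossing hT hst huv hu (by tauto)
    exact Sym2.eq_swap
  · obtain ⟨rfl, rfl⟩ := side_crossing hT hst huv.symm (by tauto) hu
    rfl

end Sides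

/-! ### From tree embeddings of a graph to cuts of its line graph -/

section LineGraph

variable {V : Type} {G : SimpleGraph V}

/-- The vertices of the line graph (that is, edges of `G`) incident both with some edge of the line
graph in `A` and with one outside `A`: the set counted by the width of a tree edge with leaf
bipartition `A`, `Aᶜ`. -/
def boundary (G : SimpleGraph V) (A : Set G.lineGraph.edgeSet) : Set G.edgeSet :=
  {e | (∃ x ∈ A, e ∈ (x : Sym2 G.edgeSet)) ∧ ∃ y, y ∉ A ∧ e ∈ (y : Sym2 G.edgeSet)}

/-- Each edge of the line graph comes from a vertex of `G` shared by its two ends. -/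
lemma exists_common_vertex (x : G.lineGraph.edgeSet) :
    ∃ v : V, ∀ e ∈ (x : Sym2 G.edgeSet), v ∈ (e : Sym2 V) := by
  obtain ⟨⟨e, f⟩, h⟩ := x
  obtain ⟨-, v, he, hf⟩ := h
  refine ⟨v, fun g hg => ?_⟩
  rcases Sym2.mem_iff.1 hg with rfl | rfl
  · exact he
  · exact hf

/-- A choice of common vertex for the two ends of an edge of the line graph. -/
noncomputable def anchor (x : G.lineGraph.edgeSet) : V := (exists_common_vertex x).choose

lemma anchor_mem (x : G.lineGraph.edgeSet) (e : G.edgeSet) (he : e ∈ (x : Sym2 G.edgeSet)) :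
    anchor x ∈ (e : Sym2 V) := (exists_common_vertex x).choose_spec e he

variable [Fintype V] {W : Type} [Fintype W]

/-- The edges of `G` having exactly one end on a given side of a tree edge are routed through that
edge, so there are at most `ecOf` of them. -/
lemma ncard_le_ecOf (E : TreeEmbedding G W) {s t : W} (hst : E.T.Adj s t) {B : Set G.edgeSet}
    (hB : ∀ e ∈ B, ∃ u v, (e : Sym2 V) = s(u, v) ∧ E.b u ∈ side E.T s t ∧
      E.b v ∉ side E.T s t) :
    B.ncard ≤ ecOf E (fun _ => 1) := by
  have h1 : conE E (fun _ => 1) s(s, t) ≤ ecOf E (fun _ => 1) :=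
    Finset.le_sup (f := conE E (fun _ => 1)) (by simpa using hst)
  refine le_trans ?_ h1
  rw [conE, Finset.sum_const, smul_eq_mul, mul_one, ← Set.ncard_coe_finset]
  refine Set.ncard_le_ncard_of_injOn Subtype.val ?_ Subtype.val_injective.injOn
    (Set.toFinite _)
  intro e he
  obtain ⟨u, v, huv, hu, hv⟩ := hB e he
  obtain ⟨p, hp⟩ := E.isTree.connected.exists_isPath (E.b u) (E.b v)
  have hmem : s(s, t) ∈ p.edges :=
    crossing_mem_edges (c := (· ∈ side E.T s t)) (side_crossing_edge E.isTree hst) p (by tauto)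
  simp only [Finset.coe_filter, Set.mem_ofPred_eq, mem_edgeFinset]
  exact ⟨e.2, u, v, huv, p, hp, hmem⟩

/-- The edges of the line graph whose anchor is embedded on the `t`-side of `s(s, t)`. -/
def sideLabels (E : TreeEmbedding G W) (s t : W) : Set G.lineGraph.edgeSet :=
  {x | E.b (anchor x) ∈ side E.T s t}

lemma boundary_sideLabels_le (E : TreeEmbedding G W) {s t : W} (hst : E.T.Adj s t) :
    (boundary G (sideLabels E s t)).ncard ≤ ecOf E (fun _ => 1) := by
  refine ncard_le_ecOf E hst ?_
  rintro e ⟨⟨x, hx, hex⟩, y, hy, hey⟩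
  refine ⟨anchor x, anchor y, ?_, hx, hy⟩
  have hne : anchor x ≠ anchor y := by
    intro h
    apply hy
    rw [sideLabels, Set.mem_ofPred_eq, ← h]
    exact hx
  exact (Sym2.mem_and_mem_iff hne).1 ⟨anchor_mem x e hex, anchor_mem y e hey⟩

/-- All cuts inside the bundle of labels attached to a leaf of the embedding are good, because
they only involve the edges of `G` at the corresponding vertex. -/
lemma boundary_leaf_le (E : TreeEmbedding G W) {s t : W} (hst : E.T.Adj s t)
    (ht : side E.T s t = {t}) {R : Set G.lineGraph.edgeSet} (hR : R ⊆ sideLabels E s t) :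
    (boundary G R).ncard ≤ ecOf E (fun _ => 1) := by
  refine ncard_le_ecOf E hst ?_
  rintro e ⟨⟨x, hx, hex⟩, -⟩
  have hx' : E.b (anchor x) ∈ side E.T s t := hR hx
  obtain ⟨v, hv⟩ := Sym2.mem_iff_exists.1 (anchor_mem x e hex)
  refine ⟨anchor x, v, hv, hx', ?_⟩
  have hadj : G.Adj (anchor x) v := by
    have := e.2
    rwa [hv] at this
  rw [ht, Set.mem_singleton_iff] at hx' ⊢
  rw [← hx']
  exact fun h => hadj.ne (E.inj h).symm

lemma build_sideLabels (E : TreeEmbedding G W) :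
    ∀ (n : ℕ) (s t : W), E.T.Adj s t → (side E.T s t).ncard = n → (sideLabels E s t).Nonempty →
      Build (fun A => (boundary G A).ncard ≤ ecOf E (fun _ => 1)) (sideLabels E s t) := by
  intro n
  induction n using Nat.strong_induction_on with
  | _ n ih =>
  intro s t hst hn hne
  have hT := E.isTree
  rcases E.cubic t with h1 | h3
  · obtain ⟨a, ha⟩ := Set.ncard_eq_one.1 h1
    have hs : ∀ p, E.T.Adj t p → p = s := by
      intro p hp
      have hp' : p ∈ E.T.neighborSet t := hp
      have hs' : s ∈ E.T.neighborSet t := hst.symm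
      rw [ha] at hp' hs'
      rw [hp', hs']
    have hside : side E.T s t = {t} := by
      ext w
      rw [mem_side_iff hT hst, Set.mem_singleton_iff]
      refine or_iff_left ?_
      rintro ⟨p, hp, hps, -⟩
      exact hps (hs p hp)
    exact Build.of_forall_subset (Set.toFinite _) hne fun R hR => boundary_leaf_le E hst hside hR
  · have h2 : (E.T.neighborSet t \ {s}).ncard = 2 := by
      have hs : s ∈ E.T.neighborSet t := hst.symm
      rw [Set.ncard_sdiff_singleton_of_mem hs, h3]
    obtain ⟨p, q, hpq, heq⟩ := Set.ncard_eq_two.1 h2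
    have hmem : ∀ r, (E.T.Adj t r ∧ r ≠ s) ↔ r = p ∨ r = q := fun r => by
      simpa using Set.ext_iff.1 heq r
    obtain ⟨hp, hps⟩ := (hmem p).2 (Or.inl rfl)
    obtain ⟨hq, hqs⟩ := (hmem q).2 (Or.inr rfl)
    have hlt : ∀ r, E.T.Adj t r → r ≠ s → (side E.T t r).ncard < n := by
      intro r hr hrs
      rw [← hn]
      refine Set.ncard_lt_ncard ⟨fun w hw => (mem_side_iff hT hst).2 (Or.inr ⟨r, hr, hrs, hw⟩),
        fun hsub => ?_⟩ (Set.toFinite _)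
      exact (mem_side_swap hT hr).1 (mem_side_self hT hr.symm)
        (hsub (mem_side_self hT hst))
    have hunion : sideLabels E s t = sideLabels E t p ∪ sideLabels E t q := by
      ext x
      have hxt : E.b (anchor x) ≠ t := by
        intro h
        have := E.leaf_b (anchor x)
        rw [h] at this
        omega
      simp only [sideLabels, Set.mem_ofPred_eq, Set.mem_union, mem_side_iff hT hst, hxt, false_or]
      constructor
      · rintro ⟨r, hr, hrs, h⟩
        rcases (hmem r).1 ⟨hr, hrs⟩ with rfl | rfl
        · exact Or.inl h
        · exact Or.inr h
      · rintro (h | h)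
        · exact ⟨p, hp, hps, h⟩
        · exact ⟨q, hq, hqs, h⟩
    have hdisj : Disjoint (sideLabels E t p) (sideLabels E t q) :=
      Set.disjoint_left.2 fun x h h' => Set.disjoint_left.1 (side_disjoint hT hp hq hpq) h h'
    have hgood := boundary_sideLabels_le E hst
    rcases (sideLabels E t p).eq_empty_or_nonempty with hpe | hpe
    · rw [hpe, Set.empty_union] at hunion
      rw [hunion] at hne ⊢
      exact ih _ (hlt q hq hqs) t q hq rfl hne
    · rcases (sideLabels E t q).eq_empty_or_nonempty with hqe | hqe
      · rw [hqe, Set.union_empty] at hunion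
        rw [hunion] at hne ⊢
        exact ih _ (hlt p hp hps) t p hp rfl hne
      · rw [hunion] at hgood ⊢
        exact Build.union _ _ hdisj (ih _ (hlt p hp hps) t p hp rfl hpe)
          (ih _ (hlt q hq hqs) t q hq rfl hqe) hgood

lemma build_univ [Nonempty G.lineGraph.edgeSet] (E : TreeEmbedding G W) :
    Build (fun A => (boundary G A).ncard ≤ ecOf E (fun _ => 1)) Set.univ := by
  obtain ⟨x⟩ := ‹Nonempty G.lineGraph.edgeSet›
  obtain ⟨s, hs⟩ := Set.ncard_eq_one.1 (E.leaf_b (anchor x))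
  generalize E.b (anchor x) = t at hs
  have hst : E.T.Adj t s := by
    have : s ∈ E.T.neighborSet t := by rw [hs]; rfl
    exact this
  have hT := E.isTree
  have hunion : Set.univ = sideLabels E t s ∪ sideLabels E s t := by
    ext y
    simp only [Set.mem_univ, Set.mem_union, sideLabels, Set.mem_ofPred_eq,
      mem_side_swap hT hst, true_iff]
    exact em _
  have hdisj : Disjoint (sideLabels E t s) (sideLabels E s t) :=
    Set.disjoint_left.2 fun y h h' => (mem_side_swap hT hst).1 h' h
  have hne : (Set.univ : Set G.lineGraph.edgeSet).Nonempty := ⟨x, trivial⟩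
  have hgood : (boundary G Set.univ).ncard ≤ ecOf E (fun _ => 1) := by
    have : boundary G Set.univ = ∅ := by
      ext e
      simp [boundary]
    rw [this, Set.ncard_empty]
    exact Nat.zero_le _
  rcases (sideLabels E t s).eq_empty_or_nonempty with hpe | hpe
  · rw [hpe, Set.empty_union] at hunion
    rw [hunion] at hne ⊢
    exact build_sideLabels E _ s t hst.symm rfl hne
  · rcases (sideLabels E s t).eq_empty_or_nonempty with hqe | hqe
    · rw [hqe, Set.union_empty] at hunion
      rw [hunion] at hne ⊢
      exact build_sideLabels E _ t s hst rfl hne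
    · rw [hunion] at hgood ⊢
      exact Build.union _ _ hdisj (build_sideLabels E _ t s hst rfl hpe)
        (build_sideLabels E _ s t hst.symm rfl hqe) hgood

lemma exists_branchDecomp [Fintype G.edgeSet] [Nontrivial G.lineGraph.edgeSet]
    (E : TreeEmbedding G W) :
    ∃ (n : ℕ) (D : BranchDecomp G.lineGraph (Fin n)), widthOf D ≤ ecOf E (fun _ => 1) := by
  obtain ⟨n, T, b, hT, hcub, hleaf, hinj, hcut⟩ := (build_univ E).exists_cubic_tree
  refine ⟨n, ⟨T, b, hT, hcub, fun e => (hleaf _).2 ⟨e, rfl⟩, hinj, fun t => (hleaf t).1⟩, ?_⟩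
  refine Finset.sup_le ?_
  rintro ⟨x, y⟩ hxy
  obtain ⟨c, hc, hu, hg⟩ := hcut x y (by simpa using hxy)
  refine le_trans ?_ hg
  rw [widthE, ← Set.ncard_coe_finset]
  refine Set.ncard_le_ncard ?_ (Set.toFinite _)
  intro e he
  simp only [Finset.coe_filter, Finset.mem_univ, true_and, Set.mem_ofPred_eq] at he
  obtain ⟨x₁, x₂, h₁, h₂, p, hp, hmem⟩ := he
  have hne := crossing_of_mem_edges hc hu p hp.isTrail.edges_nodup hmem
  by_cases hx : c (b x₁)
  · exact ⟨⟨x₁, hx, h₁⟩, x₂, by simp only [Set.mem_ofPred_eq]; tauto, h₂⟩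
  · exact ⟨⟨x₂, by simp only [Set.mem_ofPred_eq]; tauto, h₂⟩, x₁, hx, h₁⟩

/-- Tree embeddings exist, so the infimum defining `ecG` is attained. -/
lemma exists_treeEmbedding [Nontrivial V] (G : SimpleGraph V) :
    ∃ n : ℕ, Nonempty (TreeEmbedding G (Fin n)) := by
  have hB : Build (fun _ : Set V => True) Set.univ :=
    Build.of_forall_subset (Set.toFinite _) Set.univ_nonempty fun _ _ => trivial
  obtain ⟨n, T, b, hT, hcub, hleaf, hinj, -⟩ := hB.exists_cubic_tree
  exact ⟨n, ⟨⟨T, b, hT, hcub, fun v => (hleaf _).2 ⟨v, rfl⟩, hinj, fun t => (hleaf t).1⟩⟩⟩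

end LineGraph


theorem exists_branchDecomp_of_treeEmbedding {V : Type} [Fintype V] (G : SimpleGraph V)
    (hV : 2 ≤ Fintype.card V)
    (hLE : 2 ≤ G.lineGraph.edgeSet.ncard) :
    (∀ (W : Type) [Fintype W] (E : TreeEmbedding G W),
        ∃ (n : ℕ) (D : BranchDecomp G.lineGraph (Fin n)),
          widthOf D ≤ ecOf E (fun _ => 1)) ∧
      branchwidth G.lineGraph ≤ ecG G (fun _ => 1) := by
  have : Nontrivial V := Fintype.one_lt_card_iff_nontrivial.1 hV
  have : Nontrivial G.lineGraph.edgeSet := by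
    obtain ⟨x, hx, y, hy, hxy⟩ := (Set.one_lt_ncard (Set.toFinite _)).1 hLE
    exact ⟨⟨x, hx⟩, ⟨y, hy⟩, fun h => hxy (congrArg Subtype.val h)⟩
  refine ⟨fun W _ E => exists_branchDecomp E, ?_⟩
  obtain ⟨m, ⟨E₀⟩⟩ := exists_treeEmbedding G
  obtain ⟨n, E, hE⟩ : ecG G (fun _ => 1) ∈
      {k | ∃ (n : ℕ) (E : TreeEmbedding G (Fin n)), ecOf E (fun _ => 1) = k} :=
    Nat.sInf_mem ⟨_, m, E₀, rfl⟩
  obtain ⟨l, D, hD⟩ := exists_branchDecomp E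
  rw [← hE]
  have hle : branchwidth G.lineGraph ≤ widthOf D := Nat.sInf_le ⟨l, D, rfl⟩
  exact hle.trans hD
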